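/- Let n ≥ 1, d ∈ ℝ^n with d > 0 entrywise, y ∈ ℝ^n, and σ, τ ∈ S_n with y_{τ(1)}/d_{τ(1)} > y_{τ(2)}/d_{τ(2)} > … > y_{τ(n)}/d_{τ(n)} (in particular the map i ↦ y_i/d_i is injective). If A is any d-stochastic matrix with A·y = E_{d,y}(σ), then A = A_{στ}; i.e., A_{στ} is the unique d-stochastic matrix mapping y to the extreme point E_{d,y}(σ). -/

import Mathlib

open Finset

noncomputable def th {n : ℕ} (d y : Fin n → ℝ) (c : ℝ) : ℝ :=
  sInf ((fun i => (∑ j, max (y j - y i / d i * d j) 0) + y i / d i * c) ''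
    {i : Fin n | 0 < d i})

noncomputable def psum {n : ℕ} (d : Fin n → ℝ) (σ : Equiv.Perm (Fin n)) (j : ℕ) : ℝ :=
  ∑ i ∈ Finset.univ.filter (fun i : Fin n => (i : ℕ) < j), d (σ i)

noncomputable def Emap {n : ℕ} (d y : Fin n → ℝ) (σ : Equiv.Perm (Fin n)) : Fin n → ℝ :=
  fun k => th d y (psum d σ ((σ.symm k : ℕ) + 1)) - th d y (psum d σ (σ.symm k : ℕ))

def dStoch {n : ℕ} (d : Fin n → ℝ) (A : Matrix (Fin n) (Fin n) ℝ) : Prop :=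
  (∀ i j, 0 ≤ A i j) ∧ (∀ j, ∑ i, A i j = 1) ∧ A.mulVec d = d

def Mset {n : ℕ} (d y : Fin n → ℝ) : Set (Fin n → ℝ) :=
  {x | ∃ A : Matrix (Fin n) (Fin n) ℝ, dStoch d A ∧ A.mulVec y = x}

noncomputable def Aentry {n : ℕ} (d : Fin n → ℝ) (σ τ : Equiv.Perm (Fin n))
    (α : ℕ → Fin n) (j k : Fin n) : ℝ :=
  if k = α j.val ∧ (α j.val).val < (α (j.val + 1)).val then
    (psum d τ ((α j.val).val + 1) - psum d σ j.val) / d (τ (α j.val))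
  else if (α j.val).val < k.val ∧ k.val < (α (j.val + 1)).val then 1
  else if (α j.val).val < (α (j.val + 1)).val ∧ k = α (j.val + 1) then
    (psum d σ (j.val + 1) - psum d τ (α (j.val + 1)).val) / d (τ (α (j.val + 1)))
  else if α j.val = α (j.val + 1) ∧ k = α (j.val + 1) then
    d (σ j) / d (τ (α (j.val + 1)))
  else 0

noncomputable def Amat {n : ℕ} (d : Fin n → ℝ) (σ τ : Equiv.Perm (Fin n))
    (α : ℕ → Fin n) : Matrix (Fin n) (Fin n) ℝ :=
  Matrix.of fun p q => Aentry d σ τ α (σ.symm p) (τ.symm q)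

lemma filt_succ {n : ℕ} (g : Fin n → ℝ) (j : Fin n) :
    ∑ i ∈ Finset.univ.filter (fun i : Fin n => (i : ℕ) < j.val + 1), g i =
    ∑ i ∈ Finset.univ.filter (fun i : Fin n => (i : ℕ) < j.val), g i + g j := by
  have h : Finset.univ.filter (fun i : Fin n => (i : ℕ) < j.val + 1)
      = insert j (Finset.univ.filter (fun i : Fin n => (i : ℕ) < j.val)) := by
    ext i
    simp only [Finset.mem_filter, Finset.mem_univ, true_and, Finset.mem_insert, Fin.ext_iff]
    omega
  rw [h, Finset.sum_insert (by simp), add_comm]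

lemma psum_mono {n : ℕ} (d : Fin n → ℝ) (hd : ∀ i, 0 < d i) (σ : Equiv.Perm (Fin n)) {a b : ℕ}
    (h : a ≤ b) : psum d σ a ≤ psum d σ b := by
  unfold psum
  apply Finset.sum_le_sum_of_subset_of_nonneg
  · intro i
    simp only [Finset.mem_filter, Finset.mem_univ, true_and]
    omega
  · intro i _ _
    exact (hd _).le

lemma psum_zero' {n : ℕ} (d : Fin n → ℝ) (σ : Equiv.Perm (Fin n)) : psum d σ 0 = 0 := by
  simp [psum]

lemma psum_full {n : ℕ} (d : Fin n → ℝ) (σ : Equiv.Perm (Fin n)) : psum d σ n = ∑ i, d i := by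
  simp [psum, Equiv.sum_comp σ d]

/-- greedy weights -/
noncomputable def gw {n : ℕ} (D : Fin n → ℝ) (S T : ℝ) (i k : Fin n) : ℝ :=
  if k < i then 1 else if k = i then (S - T) / D k else 0

lemma gw_sum {n : ℕ} (D : Fin n → ℝ) (hD : ∀ k, 0 < D k) (S T : ℝ) (i : Fin n)
    (hT : T = ∑ k ∈ Finset.univ.filter (fun k : Fin n => (k : ℕ) < i.val), D k) :
    ∑ k, gw D S T i k * D k = S := by
  have h : ∀ k, gw D S T i k * D k =
      (if (k : ℕ) < i.val then D k else 0) + (if k = i then S - T else 0) := by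
    intro k
    have := (hD k).ne'
    unfold gw
    rcases lt_trichotomy k i with h | h | h
    · have h2 : (k : ℕ) < i := h
      simp [h, h2, h.ne]
    · subst h
      simp
      field_simp
    · have h2 : ¬ (k : ℕ) < i := not_lt.2 h.le
      simp [h2, h.ne', not_lt.2 h.le]
  simp only [h, Finset.sum_add_distrib, ← Finset.sum_filter, ← hT]
  simp [Finset.filter_eq']

lemma core {n : ℕ} (D Y : Fin n → ℝ) (hD : ∀ k, 0 < D k)
    (hr : StrictAnti (fun k => Y k / D k)) (S T : ℝ) (i : Fin n)
    (c g : Fin n → ℝ) (hc0 : ∀ k, 0 ≤ c k) (hc1 : ∀ k, c k ≤ 1)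
    (hg1 : ∀ k, k < i → g k = 1) (hg0 : ∀ k, i < k → g k = 0)
    (hcS : ∑ k, c k * D k = S) (hgS : ∑ k, g k * D k = S)
    (hY : ∑ k, g k * Y k ≤ ∑ k, c k * Y k) : c = g := by
  have hYr : ∀ k, Y k = (Y k / D k) * D k := fun k => by
    have := (hD k).ne'
    field_simp
  have hterm : ∀ k, 0 ≤ (g k - c k) * (Y k - Y i / D i * D k) := by
    intro k
    rcases lt_trichotomy k i with h | h | h
    · apply mul_nonneg
      · rw [hg1 k h]; linarith [hc1 k]
      · have h2 : Y i / D i < Y k / D k := hr h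
        nlinarith [hYr k, hD k]
    · subst h
      rw [← hYr]; simp
    · apply mul_nonneg_of_nonpos_of_nonpos
      · rw [hg0 k h]; linarith [hc0 k]
      · have h2 : Y k / D k < Y i / D i := hr h
        nlinarith [hYr k, hD k]
  have hsum : ∑ k, (g k - c k) * (Y k - Y i / D i * D k) =
      ∑ k, g k * Y k - ∑ k, c k * Y k
        - Y i / D i * (∑ k, g k * D k - ∑ k, c k * D k) := by
    rw [← Finset.sum_sub_distrib, ← Finset.sum_sub_distrib, Finset.mul_sum,
      ← Finset.sum_sub_distrib]
    exact Finset.sum_congr rfl fun k _ => by ring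
  have hz : ∑ k, (g k - c k) * (Y k - Y i / D i * D k) = 0 := by
    apply le_antisymm
    · rw [hsum, hcS, hgS]; linarith
    · exact Finset.sum_nonneg fun k _ => hterm k
  have hall := (Finset.sum_eq_zero_iff_of_nonneg (fun k _ => hterm k)).1 hz
  have hne : ∀ k, k ≠ i → c k = g k := by
    intro k hk
    have h := hall k (Finset.mem_univ k)
    rcases mul_eq_zero.1 h with h | h
    · linarith
    · exfalso
      apply hk
      apply hr.injective
      have := hD k
      show Y k / D k = Y i / D i
      rw [div_eq_iff this.ne']; linarith
  have hi : c i = g i := by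
    have h : ∑ k, (c k - g k) * D k = 0 := by
      simp only [sub_mul, Finset.sum_sub_distrib]; linarith
    rw [Finset.sum_eq_single i] at h
    · rcases mul_eq_zero.1 h with h | h
      · linarith
      · exact absurd h (hD i).ne'
    · intro k _ hk
      rw [hne k hk]; ring
    · simp
  funext k
  by_cases hk : k = i
  · rw [hk, hi]
  · exact hne k hk

lemma th_lower {n : ℕ} (hn : 1 ≤ n) (d y : Fin n → ℝ) (hd : ∀ i, 0 < d i) (τ : Equiv.Perm (Fin n))
    (g : Fin n → ℝ) (hg0 : ∀ k, 0 ≤ g k) (hg1 : ∀ k, g k ≤ 1) (S : ℝ)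
    (hS : ∑ k, g k * d (τ k) = S) : ∑ k, g k * y (τ k) ≤ th d y S := by
  apply le_csInf
  · exact ⟨_, ⟨⟨0, hn⟩, hd _, rfl⟩⟩
  · rintro _ ⟨i, -, rfl⟩
    simp only
    rw [← Equiv.sum_comp τ (fun j => max (y j - y i / d i * d j) 0), ← hS, Finset.mul_sum,
      ← Finset.sum_add_distrib]
    apply Finset.sum_le_sum
    intro k _
    have h1 := le_max_left (y (τ k) - y i / d i * d (τ k)) 0
    have h2 := le_max_right (y (τ k) - y i / d i * d (τ k)) 0
    set m := max (y (τ k) - y i / d i * d (τ k)) 0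
    nlinarith [mul_le_mul_of_nonneg_left h1 (hg0 k), mul_le_mul_of_nonneg_right (hg1 k) h2]

lemma th_zero {n : ℕ} (hn : 1 ≤ n) (d y : Fin n → ℝ) (hd : ∀ i, 0 < d i) (τ : Equiv.Perm (Fin n))
    (hτ : StrictAnti (fun j : Fin n => y (τ j) / d (τ j))) : th d y 0 ≤ 0 := by
  apply csInf_le ((Set.toFinite _).image _).bddBelow
  refine ⟨τ ⟨0, hn⟩, hd _, ?_⟩
  simp only [mul_zero, add_zero]
  apply Finset.sum_eq_zero
  intro j _
  apply max_eq_right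
  have h : y (τ (τ.symm j)) / d (τ (τ.symm j)) ≤ y (τ ⟨0, hn⟩) / d (τ ⟨0, hn⟩) :=
    hτ.antitone (Fin.mk_le_of_le_val (Nat.zero_le _))
  rw [Equiv.apply_symm_apply, div_le_iff₀ (hd j)] at h
  linarith

/-- If y/d is strictly decreasingly sorted by τ, then A_{στ} is the unique
d-stochastic matrix mapping y to the extreme point E_{d,y}(σ). -/
theorem stmt7 (n : ℕ) (hn : 1 ≤ n) (d : Fin n → ℝ) (hd : ∀ i, 0 < d i)
    (y : Fin n → ℝ) (σ τ : Equiv.Perm (Fin n))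
    (hτ : StrictAnti (fun j : Fin n => y (τ j) / d (τ j)))
    (α : ℕ → Fin n)
    (hα0 : (α 0).val = 0) (hαn : (α n).val = n - 1)
    (hα : ∀ j : ℕ, 1 ≤ j → j ≤ n - 1 →
      psum d τ (α j).val < psum d σ j ∧ psum d σ j ≤ psum d τ ((α j).val + 1))
    (A : Matrix (Fin n) (Fin n) ℝ) (hA : dStoch d A)
    (hAy : A.mulVec y = Emap d y σ) :
    A = Amat d σ τ α := by
  obtain ⟨hA0, hA1, hAd⟩ := hA
  -- bounds for every j
  have hα' : ∀ j : ℕ, j ≤ n →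
      psum d τ (α j).val ≤ psum d σ j ∧ psum d σ j ≤ psum d τ ((α j).val + 1) := by
    intro j hj
    rcases Nat.eq_zero_or_pos j with h0 | h0
    · subst h0
      rw [hα0, psum_zero', psum_zero']
      exact ⟨le_rfl, (psum_zero' d τ).symm.le.trans (psum_mono d hd τ (Nat.zero_le _))⟩
    · rcases Nat.lt_or_ge j n with h1 | h1
      · have := hα j h0 (by omega)
        exact ⟨this.1.le, this.2⟩
      · obtain rfl : j = n := le_antisymm hj h1
        rw [hαn, Nat.sub_add_cancel hn, psum_full d σ, ← psum_full d τ]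
        exact ⟨psum_mono d hd τ (by omega), le_rfl⟩
  have hsucc : ∀ (ρ : Equiv.Perm (Fin n)) (j : Fin n),
      psum d ρ (j.val + 1) = psum d ρ j.val + d (ρ j) :=
    fun ρ j => filt_succ (fun i => d (ρ i)) j
  let W : ℕ → Fin n → ℝ := fun j k =>
    ∑ i ∈ Finset.univ.filter (fun i : Fin n => (i : ℕ) < j), A (σ i) (τ k)
  have hWsucc : ∀ (j k : Fin n), W (j.val + 1) k = W j.val k + A (σ j) (τ k) :=
    fun j k => filt_succ (fun i => A (σ i) (τ k)) j
  have hW0 : ∀ j k, 0 ≤ W j k := fun j k => Finset.sum_nonneg fun _ _ => hA0 _ _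
  have hW1 : ∀ j k, W j k ≤ 1 := by
    intro j k
    rw [← hA1 (τ k), ← Equiv.sum_comp σ]
    exact Finset.sum_le_sum_of_subset_of_nonneg (Finset.filter_subset _ _)
      fun _ _ _ => hA0 _ _
  have hrow : ∀ (v : Fin n → ℝ) (p : Fin n), ∑ k, A p (τ k) * v (τ k) = A.mulVec v p := by
    intro v p
    rw [Equiv.sum_comp τ (fun k => A p k * v k)]
    rfl
  have hWv : ∀ (v : Fin n → ℝ) (j : ℕ), ∑ k, W j k * v (τ k) =
      ∑ i ∈ Finset.univ.filter (fun i : Fin n => (i : ℕ) < j), A.mulVec v (σ i) := by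
    intro v j
    simp only [W, Finset.sum_mul]
    rw [Finset.sum_comm]
    exact Finset.sum_congr rfl fun i _ => hrow v _
  have hWd : ∀ j, ∑ k, W j k * d (τ k) = psum d σ j := by
    intro j
    rw [hWv, hAd]; rfl
  have hWy : ∀ j, j ≤ n → ∑ k, W j k * y (τ k) = th d y (psum d σ j) - th d y 0 := by
    intro j
    induction j with
    | zero => intro _; simp [W, psum_zero']
    | succ j ih =>
      intro hj
      have h := filt_succ (fun i => A.mulVec y (σ i)) ⟨j, hj⟩
      simp only at h
      rw [hWv, h, ← hWv, ih (by omega), hAy]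
      simp [Emap]
  have key : ∀ j, j ≤ n →
      W j = gw (fun k => d (τ k)) (psum d σ j) (psum d τ (α j).val) (α j) := by
    intro j hj
    obtain ⟨hl, hu⟩ := hα' j hj
    have hgS := gw_sum (fun k => d (τ k)) (fun k => hd _) (psum d σ j)
      (psum d τ (α j).val) (α j) rfl
    rw [hsucc] at hu
    refine core (fun k => d (τ k)) (fun k => y (τ k)) (fun k => hd _) hτ (psum d σ j) 0 (α j)
      _ _ (hW0 j) (hW1 j) ?_ ?_ (hWd j) hgS ?_
    · intro k hk; simp [gw, hk]
    · intro k hk; simp [gw, hk.ne', not_lt.2 hk.le]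
    · rw [hWy j hj]
      have h1 := th_zero hn d y hd τ hτ
      have h2 := th_lower hn d y hd τ
        (gw (fun k => d (τ k)) (psum d σ j) (psum d τ (α j).val) (α j)) ?_ ?_ _ hgS
      · linarith
      · intro k
        unfold gw
        split_ifs with h3 h4
        · norm_num
        · exact div_nonneg (by linarith) (hd _).le
        · exact le_rfl
      · intro k
        unfold gw
        split_ifs with h3 h4
        · norm_num
        · subst h4
          rw [div_le_one (hd _)]; linarith
        · norm_num
  have main : ∀ j k, A (σ j) (τ k) = Aentry d σ τ α j k := by
    intro j k
    have e : A (σ j) (τ k) = W (j.val + 1) k - W j.val k := by rw [hWsucc]; ring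
    rw [e, key _ j.isLt, key _ j.isLt.le]
    have hS := hsucc σ j
    have hmono : α j.val ≤ α (j.val + 1) := by
      by_contra hlt
      have hlt' : (α (j.val + 1)).val + 1 ≤ (α j.val).val := not_le.1 hlt
      have h1 := psum_mono d hd τ hlt'
      have h2 := (hα' _ j.isLt).2
      have h3 := (hα' _ j.isLt.le).1
      have := hd (σ j)
      linarith
    have hdk := (hd (τ k)).ne'
    have hTk := hsucc τ k
    unfold Aentry gw
    generalize α (j.val + 1) = b at *
    generalize α j.val = a at *
    rcases hmono.lt_or_eq with hab | hab
    · have hab' : a.val < b.val := hab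
      rcases lt_trichotomy k a with h | h | h
      · have h2 : ¬ a.val < k.val := not_lt.2 h.le
        simp [h, h.ne, h.trans hab, (h.trans hab).ne, h.le]
      · subst h
        simp [hab]
        rw [hTk]
        field_simp
        ring
      · rcases lt_trichotomy k b with h' | h' | h'
        · simp [h, h', h.ne', not_lt.2 h.le]
        · subst h'
          simp [h, h.ne', not_lt.2 h.le]
        · simp [h, h', h.ne', h'.ne', not_lt.2 h.le, not_lt.2 h'.le, hab.ne]
    · subst hab
      rcases lt_trichotomy k a with h | h | h
      · simp [h, h.ne, h.le]
      · subst h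
        simp [hS]
        field_simp
        ring
      · simp [h, h.ne', not_lt.2 h.le]
  ext p q
  have := main (σ.symm p) (τ.symm q)
  simpa [Amat] using this
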